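/- Let ψ : 𝔻ᵏ → ℂᵏ be holomorphic and C¹-smooth on the closed polydisc, and let V ⊆ ℂᵏ be a domain such that the complex derivative d_zψ is non-degenerate (invertible) for every z in the intersection of the closure of V with the closure of 𝔻ᵏ. Let β ∈ (-1, 0]. Then there exists a constant c > 0 such that for all δ_1, …, δ_k > 0: V_β({z ∈ closure(V) ∩ closure(𝔻ᵏ) : |ψ_i(z)| < δ_i for i = 1,…,k}) ≤ c·δ_1^{2+β}·δ_2^{2+β}⋯δ_k^{2+β}. -/

import Mathlib

open MeasureTheory Metric Set ENNReal

noncomputable section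

/-- The open unit polydisc in `ℂⁿ`. -/
def polydisc (n : ℕ) : Set (Fin n → ℂ) := {z | ∀ j, ‖z j‖ < 1}

/-- The closed unit polydisc in `ℂⁿ`. -/
def closedPolydisc (n : ℕ) : Set (Fin n → ℂ) := {z | ∀ j, ‖z j‖ ≤ 1}

/-- The distinguished boundary (torus) of the polydisc. -/
def torus (n : ℕ) : Set (Fin n → ℂ) := {z | ∀ j, ‖z j‖ = 1}

/-- The weighted Bergman measure `V_β` on the polydisc: the product of the measures
`dA_β(z) = (β+1)(1-|z|²)^β dA(z)`, where `dA` is normalized area measure on the unit disc. -/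
def Vbeta (n : ℕ) (β : ℝ) : Measure (Fin n → ℂ) :=
  (volume.restrict (polydisc n)).withDensity
    (fun z => ENNReal.ofReal (∏ j, ((β + 1) * (1 - ‖z j‖ ^ 2) ^ β / Real.pi)))

/-!
Near a point `z₀` where `A = d_{z₀}ψ` is invertible, `ψ` differs from the linear map `A` by an error
that can be absorbed, so two points of the sublevel set that agree in enough coordinates are close.
Order the levels decreasingly, `δ_{τ 0} ≥ δ_{τ 1} ≥ ⋯`. Pivoting on the rows `τ 0, τ 1, …` of `A`
yields columns `σ 0, σ 1, …` such that a vector vanishing in the coordinates `σ j`, `j < t`, is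
controlled by the entries `τ j`, `j ≥ t`, of its image under `A`. Hence, once the coordinates `σ j`,
`j < t`, of a point of the sublevel set are fixed, its coordinate `σ t` varies in a set of diameter
`O(δ_{τ t})`. The measure `V_β` is a product of measures on the unit disc that give mass
`O(d ^ (2 + β))` to every closed disc of radius `d`, so integrating over one coordinate at a time
gives the local bound, and compactness makes it global.

For the mass of a disc of radius `d`: in the double sector `|y| ≤ |x|` the weight
`(1 - (x² + y²)) ^ β` is dominated by `|x - q| ^ β + |x + q| ^ β` with `q = √(1 - y²)`. This
integrates to `O(d ^ (1 + β))` over a set of `x` of length `O(d)`, uniformly in `y`, and then to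
`O(d ^ (2 + β))` over a set of `y` of length `O(d)`. The other sector is symmetric.
-/

section Pivoting

open scoped Matrix

lemma exists_perm_eq_zero_of_mulVec {𝕜 : Type*} [Field 𝕜] {n : ℕ}
    (A : Matrix (Fin n) (Fin n) 𝕜) (hA : A.det ≠ 0) :
    ∃ σ : Equiv.Perm (Fin n), ∀ t w, (∀ j < t, w (σ j) = 0) → (∀ j ≥ t, (A *ᵥ w) j = 0) →
      w = 0 := by
  induction n with
  | zero => exact ⟨1, fun t => t.elim0⟩
  | succ n ih =>
    -- A nonzero term of the Laplace expansion along row `0` supplies the pivot of that row.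
    obtain ⟨s, hs⟩ : ∃ s : Fin (n + 1), (A.submatrix Fin.succ s.succAbove).det ≠ 0 := by
      rw [Matrix.det_succ_row_zero] at hA
      obtain ⟨s, -, hs⟩ := Finset.exists_ne_zero_of_sum_ne_zero hA
      exact ⟨s, right_ne_zero_of_mul hs⟩
    obtain ⟨σ, hσ⟩ := ih _ hs
    let σ' : Equiv.Perm (Fin (n + 1)) :=
      (finSuccEquiv n).trans (σ.optionCongr.trans (finSuccEquiv' s).symm)
    have σ'_zero : σ' 0 = s := by simp [σ']
    have σ'_succ (j : Fin n) : σ' j.succ = s.succAbove (σ j) := by simp [σ']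
    refine ⟨σ', fun t w hw hAw => ?_⟩
    cases t using Fin.cases with
    | zero => exact Matrix.eq_zero_of_mulVec_eq_zero hA (funext fun j => hAw j (Fin.zero_le j))
    | succ t =>
      have hws : w s = 0 := σ'_zero ▸ hw 0 t.succ_pos
      have hminor (j : Fin n) : (A.submatrix Fin.succ s.succAbove *ᵥ (w ∘ s.succAbove)) j =
          (A *ᵥ w) j.succ := by
        simp [Matrix.mulVec, dotProduct, Fin.sum_univ_succAbove _ s, hws]
      have hw' : w ∘ s.succAbove = 0 := by
        refine hσ t _ (fun j hj => ?_) fun j hj => ?_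
        · simpa [σ'_succ] using hw j.succ (Fin.succ_lt_succ_iff.mpr hj)
        · rw [hminor]
          exact hAw j.succ (Fin.succ_le_succ_iff.mpr hj)
      exact funext <| Fin.forall_iff_succAbove s |>.mpr ⟨hws, congrFun hw'⟩

lemma exists_forall_perm_norm_le_of_mulVec {𝕜 : Type*} [NontriviallyNormedField 𝕜]
    [CompleteSpace 𝕜] {n : ℕ} (A : Matrix (Fin n) (Fin n) 𝕜) (hA : A.det ≠ 0) :
    ∃ κ > (0 : ℝ), ∀ τ : Equiv.Perm (Fin n), ∃ σ : Equiv.Perm (Fin n), ∀ t w d,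
      (∀ j < t, w (σ j) = 0) → (∀ j ≥ t, ‖(A *ᵥ w) (τ j)‖ ≤ d) → ‖w‖ ≤ κ * d := by
  have hpivot (τ : Equiv.Perm (Fin n)) := exists_perm_eq_zero_of_mulVec (A.submatrix τ id)
    (by
      rw [Matrix.det_permute]
      exact mul_ne_zero (((Equiv.Perm.sign τ).isUnit.map (Int.castRingHom 𝕜)).ne_zero) hA)
  choose σ hσ using hpivot
  let L (τ : Equiv.Perm (Fin n)) (t : Fin n) : (Fin n → 𝕜) →ₗ[𝕜] Fin n → 𝕜 :=
    LinearMap.pi fun j =>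
      if j < t then LinearMap.proj (σ τ j) else LinearMap.proj (τ j) ∘ₗ A.mulVecLin
  have hker (τ t) : (L τ t).ker = ⊥ := by
    refine LinearMap.ker_eq_bot'.mpr fun w hw => hσ τ t w (fun j hj => ?_) fun j hj => ?_
    · simpa [L, hj] using congrFun hw j
    · have : (A *ᵥ w) (τ j) = 0 := by simpa [L, not_lt.mpr hj] using congrFun hw j
      exact this
  choose κ _ hκ using fun p : Equiv.Perm (Fin n) × Fin n =>
    LinearMap.exists_antilipschitzWith (L p.1 p.2) (hker p.1 p.2)
  obtain ⟨M, hM⟩ := Finite.exists_le κ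
  refine ⟨M + 1, by positivity, fun τ => ⟨σ τ, fun t w d hw hAw => ?_⟩⟩
  have hd : 0 ≤ d := (norm_nonneg _).trans (hAw t le_rfl)
  have hL : ‖L τ t w‖ ≤ d := by
    refine (pi_norm_le_iff_of_nonneg hd).mpr fun j => ?_
    rcases lt_or_ge j t with hj | hj
    · simpa [L, hj, hw j hj] using hd
    · simpa [L, not_lt.mpr hj] using hAw j hj
  calc ‖w‖ ≤ κ (τ, t) * ‖L τ t w‖ := (hκ (τ, t)).le_mul_norm (map_zero _) w
    _ ≤ (M + 1) * d := by
      gcongr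
      exact (NNReal.coe_le_coe.mpr (hM (τ, t))).trans (le_add_of_nonneg_right zero_le_one)

lemma exists_forall_sublevel_dist_le {𝕜 : Type*} [NontriviallyNormedField 𝕜]
    [CompleteSpace 𝕜] {n : ℕ} (A : Matrix (Fin n) (Fin n) 𝕜) (hA : A.det ≠ 0) :
    ∃ ε > (0 : ℝ), ∃ K > (0 : ℝ), ∀ (f : (Fin n → 𝕜) → Fin n → 𝕜) (s : Set (Fin n → 𝕜)),
      (∀ z ∈ s, ∀ z' ∈ s, ‖f z - f z' - A *ᵥ (z - z')‖ ≤ ε * ‖z - z'‖) →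
      ∀ δ : Fin n → ℝ, ∃ σ τ : Equiv.Perm (Fin n),
        ∀ z ∈ {z ∈ s | ∀ i, ‖f z i‖ ≤ δ i}, ∀ z' ∈ {z ∈ s | ∀ i, ‖f z i‖ ≤ δ i},
          ∀ t, (∀ j < t, z (σ j) = z' (σ j)) → dist z z' ≤ K * δ (τ t) := by
  obtain ⟨κ, hκ, hpivot⟩ := exists_forall_perm_norm_le_of_mulVec A hA
  refine ⟨1 / (2 * κ), by positivity, 4 * κ, by positivity, fun f s hf δ => ?_⟩
  let τ := Tuple.sort fun i => -δ i
  have hτ : Antitone (δ ∘ τ) := fun i j hij =>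
    neg_le_neg_iff.mp (Tuple.monotone_sort (fun i => -δ i) hij)
  obtain ⟨σ, hσ⟩ := hpivot τ
  refine ⟨σ, τ, fun z ⟨hz, hδ⟩ z' ⟨hz', hδ'⟩ t hzz' => ?_⟩
  rw [dist_eq_norm]
  have hA_le (j) (hj : j ≥ t) :
      ‖(A *ᵥ (z - z')) (τ j)‖ ≤ 2 * δ (τ t) + 1 / (2 * κ) * ‖z - z'‖ :=
    calc ‖(A *ᵥ (z - z')) (τ j)‖
        = ‖f z (τ j) - f z' (τ j) - (f z - f z' - A *ᵥ (z - z')) (τ j)‖ := by simp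
      _ ≤ ‖f z (τ j)‖ + ‖f z' (τ j)‖ + ‖f z - f z' - A *ᵥ (z - z')‖ :=
        (norm_sub_le _ _).trans (add_le_add (norm_sub_le _ _) (norm_le_pi_norm _ _))
      _ ≤ δ (τ t) + δ (τ t) + 1 / (2 * κ) * ‖z - z'‖ := by
        gcongr
        exacts [(hδ _).trans (hτ hj), (hδ' _).trans (hτ hj), hf z hz z' hz']
      _ = 2 * δ (τ t) + 1 / (2 * κ) * ‖z - z'‖ := by ring
  have habsorb := hσ t (z - z') _ (fun j hj => sub_eq_zero.mpr (hzz' j hj)) hA_le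
  have : κ * (2 * δ (τ t) + 1 / (2 * κ) * ‖z - z'‖) = 2 * κ * δ (τ t) + ‖z - z'‖ / 2 := by
    field_simp
  linarith

end Pivoting

section ProductMeasures

lemma lintegral_pi_prod_eq_prod_lintegral {ι : Type*} [Fintype ι] {X : ι → Type*}
    [∀ i, MeasurableSpace (X i)] (μ : ∀ i, Measure (X i)) [∀ i, SigmaFinite (μ i)]
    {f : ∀ i, X i → ℝ≥0∞} (hf : ∀ i, Measurable (f i)) :
    ∫⁻ x, ∏ i, f i (x i) ∂Measure.pi μ = ∏ i, ∫⁻ y, f i y ∂μ i := by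
  classical
  have hmeas (s : Finset ι) : Measurable fun x : ∀ i, X i => ∏ i ∈ s, f i (x i) := by fun_prop
  have hlmarginal (s : Finset ι) (x : ∀ i, X i) :
      (∫⋯∫⁻_s, (fun x => ∏ i ∈ s, f i (x i)) ∂μ) x = ∏ i ∈ s, ∫⁻ y, f i y ∂μ i := by
    induction s using Finset.induction_on generalizing x with
    | empty => simp
    | insert i s his ih =>
      rw [lmarginal_insert' _ (hmeas _) his, Finset.prod_insert his]
      have hinner (x : ∀ j, X j) : ∫⁻ y, ∏ j ∈ insert i s, f j (Function.update x i y j) ∂μ i =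
          (∫⁻ y, f i y ∂μ i) * ∏ j ∈ s, f j (x j) := by
        rw [← lintegral_mul_const _ (hf i)]
        refine lintegral_congr fun y => ?_
        rw [Finset.prod_insert his, Function.update_self]
        congr 1
        refine Finset.prod_congr rfl fun j hj => ?_
        rw [Function.update_of_ne (ne_of_mem_of_not_mem hj his)]
      simp_rw [hinner, ← ih x, lmarginal]
      exact lintegral_const_mul _ ((hmeas s).comp measurable_updateFinset)
  cases isEmpty_or_nonempty (∀ i, X i) with
  | inl hX =>
    obtain ⟨i, hi⟩ := isEmpty_pi.mp hX
    rw [lintegral_of_isEmpty, Finset.prod_eq_zero (Finset.mem_univ i) (lintegral_of_isEmpty _ _)]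
  | inr hX =>
    obtain ⟨x⟩ := hX
    rw [lintegral_eq_lmarginal_univ x, hlmarginal]

lemma pi_withDensity {ι : Type*} [Fintype ι] {X : ι → Type*}
    [∀ i, MeasurableSpace (X i)] (μ : ∀ i, Measure (X i)) [∀ i, SigmaFinite (μ i)]
    {f : ∀ i, X i → ℝ≥0∞} (hf : ∀ i, Measurable (f i))
    [∀ i, SigmaFinite ((μ i).withDensity (f i))] :
    Measure.pi (fun i => (μ i).withDensity (f i)) =
      (Measure.pi μ).withDensity fun x => ∏ i, f i (x i) := by
  refine Measure.pi_eq fun s hs => ?_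
  rw [withDensity_apply _ (.univ_pi hs), Measure.restrict_pi_pi,
    lintegral_pi_prod_eq_prod_lintegral _ hf]
  exact Finset.prod_congr rfl fun i _ => (withDensity_apply _ (hs i)).symm

lemma pi_le_mul_of_slice_le {n : ℕ} {X : Fin (n + 1) → Type*} [∀ i, MeasurableSpace (X i)]
    {μ : ∀ i, Measure (X i)} [∀ i, SigmaFinite (μ i)] {E : Set (∀ i, X i)}
    (hE : MeasurableSet E) (i : Fin (n + 1)) {c : ℝ≥0∞}
    (hslice : ∀ x, Measure.pi (fun j => μ (i.succAbove j)) {y | i.insertNth x y ∈ E} ≤ c) :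
    Measure.pi μ E ≤ c * μ i {x | ∃ y, i.insertNth x y ∈ E} := by
  have hE' : MeasurableSet ((MeasurableEquiv.piFinSuccAbove X i).symm ⁻¹' E) :=
    (MeasurableEquiv.measurable _) hE
  let p : Set (X i) := {x | ∃ y, i.insertNth x y ∈ E}
  calc Measure.pi μ E
      = ∫⁻ x, Measure.pi (fun j => μ (i.succAbove j)) {y | i.insertNth x y ∈ E} ∂μ i := by
        rw [← (measurePreserving_piFinSuccAbove μ i).symm.measure_preimage_equiv,
          Measure.prod_apply hE']
        rfl
    _ ≤ ∫⁻ x, p.indicator (fun _ => c) x ∂μ i := by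
        refine lintegral_mono fun x => ?_
        by_cases hx : x ∈ p
        · simpa only [indicator_of_mem hx] using hslice x
        · have hempty : {y | i.insertNth x y ∈ E} = ∅ :=
            eq_empty_of_forall_notMem fun y hy => hx ⟨y, hy⟩
          simp only [hempty, measure_empty, zero_le]
    _ ≤ c * μ i p := lintegral_indicator_const_le _ _

lemma pi_le_prod_of_dist_le {n : ℕ} {X : Fin n → Type*} [∀ i, PseudoMetricSpace (X i)]
    [∀ i, MeasurableSpace (X i)] {μ : ∀ i, Measure (X i)} [∀ i, SigmaFinite (μ i)]
    {E : Set (∀ i, X i)} (hE : MeasurableSet E) {r : Fin n → ℝ} {b : Fin n → ℝ≥0∞}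
    (hμ : ∀ i a, μ i (closedBall a (r i)) ≤ b i)
    (hdist : ∀ z ∈ E, ∀ z' ∈ E, ∀ i, (∀ j < i, z j = z' j) → dist (z i) (z' i) ≤ r i) :
    Measure.pi μ E ≤ ∏ i, b i := by
  induction n with
  | zero =>
    rw [Measure.pi_of_empty μ finZeroElim, Finset.univ_eq_empty, Finset.prod_empty]
    exact prob_le_one
  | succ n ih =>
    have hslice (x : X 0) : Measure.pi (fun i => μ (Fin.succAbove 0 i))
        {y | Fin.insertNth 0 x y ∈ E} ≤ ∏ i, b (Fin.succAbove 0 i) := by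
      have hmeas : Measurable fun y => (MeasurableEquiv.piFinSuccAbove X 0).symm (x, y) :=
        (MeasurableEquiv.measurable _).comp measurable_prodMk_left
      refine ih (hmeas hE) (fun i => hμ _) fun y hy y' hy' i hyy' => ?_
      have h := hdist (Fin.insertNth 0 x y) hy (Fin.insertNth 0 x y') hy' (Fin.succAbove 0 i)
        fun j hj => ?_
      · simpa only [Fin.insertNth_apply_succAbove] using h
      obtain rfl | ⟨j, rfl⟩ := Fin.eq_self_or_eq_succAbove 0 j
      · simp only [Fin.insertNth_apply_same]
      · simpa only [Fin.insertNth_apply_succAbove] using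
          hyy' j ((Fin.strictMono_succAbove 0).lt_iff_lt.mp hj)
    have hproj : μ 0 {x | ∃ y, Fin.insertNth 0 x y ∈ E} ≤ b 0 := by
      rcases eq_empty_or_nonempty {x | ∃ y, Fin.insertNth 0 x y ∈ E} with h | ⟨a, y, hy⟩
      · simp only [h, measure_empty, zero_le]
      · have hsub : {x | ∃ y, Fin.insertNth 0 x y ∈ E} ⊆ closedBall a (r 0) := fun x ⟨y', hy'⟩ => by
          simpa using hdist _ hy' _ hy 0 fun j hj => absurd hj (Fin.not_lt_zero j)
        exact (measure_mono hsub).trans (hμ 0 a)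
    rw [Fin.prod_univ_succAbove _ 0, mul_comm]
    exact (pi_le_mul_of_slice_le hE 0 hslice).trans (mul_le_mul_right hproj _)

lemma pi_le_prod_of_dist_le_of_equiv {n : ℕ} {ι : Type*} [Fintype ι] {X : ι → Type*}
    [∀ i, PseudoMetricSpace (X i)] [∀ i, MeasurableSpace (X i)] {μ : ∀ i, Measure (X i)}
    [∀ i, SigmaFinite (μ i)] {E : Set (∀ i, X i)} (hE : MeasurableSet E) (σ : Fin n ≃ ι)
    {r : Fin n → ℝ} {b : Fin n → ℝ≥0∞} (hμ : ∀ i a, μ (σ i) (closedBall a (r i)) ≤ b i)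
    (hdist : ∀ z ∈ E, ∀ z' ∈ E, ∀ i, (∀ j < i, z (σ j) = z' (σ j)) →
      dist (z (σ i)) (z' (σ i)) ≤ r i) :
    Measure.pi μ E ≤ ∏ i, b i := by
  rw [← (measurePreserving_piCongrLeft μ σ).measure_preimage_equiv]
  refine pi_le_prod_of_dist_le ((MeasurableEquiv.measurable _) hE) hμ fun z hz z' hz' i hzz' => ?_
  have happly (z) (j) : MeasurableEquiv.piCongrLeft X σ z (σ j) = z j :=
    Equiv.piCongrLeft_apply_apply ..
  simpa only [happly] using hdist _ hz _ hz' i (by simpa only [happly] using hzz')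

end ProductMeasures

section SingularIntegrals

variable {β d : ℝ}

lemma setLIntegral_Icc_zero_rpow (hβ : -1 < β) (hd : 0 ≤ d) :
    ∫⁻ x in Icc 0 d, ENNReal.ofReal (x ^ β) = ENNReal.ofReal (d ^ (β + 1) / (β + 1)) := by
  have hint : IntegrableOn (fun x : ℝ => x ^ β) (Ioc 0 d) :=
    (intervalIntegrable_iff_integrableOn_Ioc_of_le hd).mp
      (intervalIntegral.intervalIntegrable_rpow' hβ)
  have hnonneg : 0 ≤ᵐ[volume.restrict (Ioc 0 d)] fun x : ℝ => x ^ β :=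
    ae_restrict_of_forall_mem measurableSet_Ioc fun x hx => Real.rpow_nonneg hx.1.le β
  rw [setLIntegral_congr Ioc_ae_eq_Icc.symm, ← ofReal_integral_eq_lintegral_ofReal hint hnonneg,
    ← intervalIntegral.integral_of_le hd, integral_rpow (.inl hβ),
    Real.zero_rpow (by linarith), sub_zero]

lemma setLIntegral_closedBall_rpow_abs_sub_center_le (hβ : -1 < β) (hd : 0 ≤ d) (b : ℝ) :
    ∫⁻ x in closedBall b d, ENNReal.ofReal (|x - b| ^ β) ≤
      ENNReal.ofReal (2 * (d ^ (β + 1) / (β + 1))) := by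
  have hside (g : ℝ → ℝ) (hg : MeasurePreserving g) (habs : ∀ x, |g x| = |x - b|) :
      ∫⁻ x in g ⁻¹' Icc 0 d, ENNReal.ofReal (|x - b| ^ β) =
        ENNReal.ofReal (d ^ (β + 1) / (β + 1)) := by
    rw [← setLIntegral_Icc_zero_rpow hβ hd,
      ← hg.setLIntegral_comp_preimage measurableSet_Icc (by fun_prop)]
    refine setLIntegral_congr_fun (hg.measurable measurableSet_Icc) fun x hx => ?_
    simp only [← habs x, abs_of_nonneg (mem_preimage.mp hx).1]
  have hcover : closedBall b d ⊆ (· - b) ⁻¹' Icc 0 d ∪ (b - ·) ⁻¹' Icc 0 d := fun x hx => by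
    have hx' := abs_le.mp (mem_closedBall_iff_norm.mp hx)
    rcases le_total b x with h | h
    · exact .inl ⟨sub_nonneg.mpr h, hx'.2⟩
    · exact .inr ⟨sub_nonneg.mpr h, by linarith⟩
  calc ∫⁻ x in closedBall b d, ENNReal.ofReal (|x - b| ^ β)
      ≤ _ + _ := (lintegral_mono_set hcover).trans (lintegral_union_le _ _ _)
    _ = ENNReal.ofReal (d ^ (β + 1) / (β + 1)) + ENNReal.ofReal (d ^ (β + 1) / (β + 1)) := by
      rw [hside _ (measurePreserving_sub_right volume b) fun _ => rfl,
        hside _ (Measure.measurePreserving_sub_left volume b) fun x => abs_sub_comm b x]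
    _ = ENNReal.ofReal (2 * (d ^ (β + 1) / (β + 1))) := by
      rw [ENNReal.ofReal_mul zero_le_two, ENNReal.ofReal_ofNat, two_mul]

lemma setLIntegral_rpow_abs_sub_le (hβ : β ∈ Ioc (-1) 0) (hd : 0 < d) {s : Set ℝ}
    (hs : volume s ≤ ENNReal.ofReal (2 * d)) (b : ℝ) :
    ∫⁻ x in s, ENNReal.ofReal (|x - b| ^ β) ≤
      ENNReal.ofReal (2 * (1 + (β + 1)⁻¹) * d ^ (β + 1)) := by
  have hβ' : 0 < β + 1 := by linarith [hβ.1]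
  let near : ℝ → ℝ≥0∞ :=
    (closedBall b d).indicator fun x => ENNReal.ofReal (|x - b| ^ β)
  have hnear : Measurable near := .indicator (by fun_prop) measurableSet_closedBall
  have hpointwise (x : ℝ) :
      ENNReal.ofReal (|x - b| ^ β) ≤ ENNReal.ofReal (d ^ β) + near x := by
    by_cases hx : x ∈ closedBall b d
    · simp only [near, indicator_of_mem hx, le_add_self]
    · have hx' : d ≤ |x - b| := (not_le.mp fun h => hx (mem_closedBall_iff_norm.mpr h)).le
      exact le_add_of_le_left
        (ENNReal.ofReal_le_ofReal (Real.rpow_le_rpow_of_nonpos hd hx' hβ.2))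
  calc ∫⁻ x in s, ENNReal.ofReal (|x - b| ^ β)
      ≤ ∫⁻ x in s, (ENNReal.ofReal (d ^ β) + near x) := lintegral_mono hpointwise
    _ = ENNReal.ofReal (d ^ β) * volume s + ∫⁻ x in s, near x := by
      rw [lintegral_add_right _ hnear, setLIntegral_const]
    _ ≤ ENNReal.ofReal (d ^ β) * ENNReal.ofReal (2 * d) +
        ENNReal.ofReal (2 * (d ^ (β + 1) / (β + 1))) := by
      gcongr
      refine (setLIntegral_le_lintegral _ _).trans ?_
      rw [lintegral_indicator measurableSet_closedBall]
      exact setLIntegral_closedBall_rpow_abs_sub_center_le hβ.1 hd.le b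
    _ = ENNReal.ofReal (2 * (1 + (β + 1)⁻¹) * d ^ (β + 1)) := by
      rw [← ENNReal.ofReal_mul (by positivity),
        ← ENNReal.ofReal_add (by positivity) (by positivity), Real.rpow_add_one hd.ne']
      congr 1
      field_simp

lemma setLIntegral_closedBall_rpow_abs_sub_graph_le {X : Type*} [PseudoMetricSpace X]
    [MeasureSpace X] (hβ : β ∈ Ioc (-1) 0) (hd : 0 < d) {φ : X → ℝ × ℝ}
    (hφ : MeasurePreserving φ) (hφ' : LipschitzWith 1 φ) {h : ℝ → ℝ} (hh : Measurable h) (a : X) :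
    ∫⁻ z in closedBall a d, ENNReal.ofReal (|(φ z).1 - h (φ z).2| ^ β) ≤
      ENNReal.ofReal (4 * (1 + (β + 1)⁻¹) * d ^ (2 + β)) := by
  have hβ' : 0 < β + 1 := by linarith [hβ.1]
  have hmeas : Measurable fun p : ℝ × ℝ => ENNReal.ofReal (|p.1 - h p.2| ^ β) := by fun_prop
  have hsub : closedBall a d ⊆ φ ⁻¹' closedBall (φ a) d :=
    fun z hz => by simpa using hφ'.dist_le_mul_of_le hz
  calc ∫⁻ z in closedBall a d, ENNReal.ofReal (|(φ z).1 - h (φ z).2| ^ β)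
      ≤ ∫⁻ p in closedBall (φ a) d, ENNReal.ofReal (|p.1 - h p.2| ^ β) := by
        rw [← hφ.setLIntegral_comp_preimage measurableSet_closedBall hmeas]
        exact lintegral_mono_set hsub
    _ = ∫⁻ y in closedBall (φ a).2 d, ∫⁻ x in closedBall (φ a).1 d,
          ENNReal.ofReal (|x - h y| ^ β) := by
        rw [← closedBall_prod_same, Measure.volume_eq_prod, ← Measure.prod_restrict,
          lintegral_prod_symm _ hmeas.aemeasurable]
    _ ≤ ∫⁻ _ in closedBall (φ a).2 d, ENNReal.ofReal (2 * (1 + (β + 1)⁻¹) * d ^ (β + 1)) :=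
        lintegral_mono fun y =>
          setLIntegral_rpow_abs_sub_le hβ hd (Real.volume_closedBall _ _).le (h y)
    _ = ENNReal.ofReal (4 * (1 + (β + 1)⁻¹) * d ^ (2 + β)) := by
        rw [setLIntegral_const, Real.volume_closedBall, ← ENNReal.ofReal_mul (by positivity),
          show 2 + β = β + 1 + 1 by ring, Real.rpow_add_one hd.ne' (β + 1)]
        congr 1
        ring

end SingularIntegrals

section DiskMeasure

variable {β : ℝ}

/-- The sum of the `β`-th powers of the horizontal distances from `(x, y)` to the two points of the
unit circle at height `y`: up to a factor, a majorant of `(1 - (x² + y²)) ^ β` in the double sector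
`|y| ≤ |x|` whose singularities are one-dimensional. -/
def circleSingularity (β : ℝ) (p : ℝ × ℝ) : ℝ :=
  |p.1 - √(1 - p.2 ^ 2)| ^ β + |p.1 + √(1 - p.2 ^ 2)| ^ β

lemma circleSingularity_nonneg (β : ℝ) (p : ℝ × ℝ) : 0 ≤ circleSingularity β p := by
  unfold circleSingularity
  positivity

@[fun_prop]
lemma measurable_circleSingularity (β : ℝ) : Measurable (circleSingularity β) := by
  unfold circleSingularity
  fun_prop

lemma rpow_one_sub_sq_add_sq_le (hβ : β ∈ Ioc (-1) 0) {x y : ℝ} (hxy : x ^ 2 + y ^ 2 < 1)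
    (hyx : |y| ≤ |x|) : (1 - (x ^ 2 + y ^ 2)) ^ β ≤ 2 * circleSingularity β (x, y) := by
  unfold circleSingularity
  set q := √(1 - y ^ 2)
  have hyx' : y ^ 2 ≤ x ^ 2 := sq_le_sq.mpr hyx
  have hq : q ^ 2 = 1 - y ^ 2 := Real.sq_sqrt (by nlinarith)
  have hq_half : 1 / 2 ≤ q := Real.le_sqrt_of_sq_le (by nlinarith)
  have hxq : |x| < q := abs_lt_of_sq_lt_sq (by linarith) (by linarith)
  have hfactor : 2⁻¹ * (q - |x|) ≤ 1 - (x ^ 2 + y ^ 2) :=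
    calc 2⁻¹ * (q - |x|) ≤ (q + |x|) * (q - |x|) := by
          gcongr
          linarith [abs_nonneg x]
      _ = 1 - (x ^ 2 + y ^ 2) := by linear_combination hq - sq_abs x
  have hnear : (q - |x|) ^ β ≤ |x - q| ^ β + |x + q| ^ β := by
    rcases abs_cases x with ⟨hx, -⟩ | ⟨hx, -⟩
    · rw [hx] at hxq ⊢
      rw [abs_sub_comm, abs_of_pos (sub_pos.mpr hxq)]
      exact le_add_of_nonneg_right (by positivity)
    · rw [hx] at hxq ⊢
      rw [abs_of_pos (by linarith : 0 < x + q), sub_neg_eq_add, add_comm q x]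
      exact le_add_of_nonneg_left (by positivity)
  calc (1 - (x ^ 2 + y ^ 2)) ^ β
      ≤ (2⁻¹ * (q - |x|)) ^ β :=
        Real.rpow_le_rpow_of_nonpos (by linarith) hfactor hβ.2
    _ = 2 ^ (-β) * (q - |x|) ^ β := by
        rw [Real.mul_rpow (by norm_num) (by linarith), Real.inv_rpow zero_le_two,
          Real.rpow_neg zero_le_two]
    _ ≤ 2 ^ (1 : ℝ) * (|x - q| ^ β + |x + q| ^ β) := by
        gcongr
        exacts [one_le_two, by linarith [hβ.1]]
    _ = 2 * (|x - q| ^ β + |x + q| ^ β) := by rw [Real.rpow_one]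

lemma setLIntegral_closedBall_circleSingularity_le {X : Type*} [PseudoMetricSpace X]
    [MeasureSpace X] (hβ : β ∈ Ioc (-1) 0) {d : ℝ} (hd : 0 < d) {φ : X → ℝ × ℝ}
    (hφ : MeasurePreserving φ) (hφ' : LipschitzWith 1 φ) (a : X) :
    ∫⁻ z in closedBall a d, ENNReal.ofReal (circleSingularity β (φ z)) ≤
      ENNReal.ofReal (8 * (1 + (β + 1)⁻¹) * d ^ (2 + β)) := by
  have hβ' : 0 < β + 1 := by linarith [hβ.1]
  have hφ_meas : Measurable φ := hφ.measurable
  calc ∫⁻ z in closedBall a d, ENNReal.ofReal (circleSingularity β (φ z))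
      = (∫⁻ z in closedBall a d, ENNReal.ofReal (|(φ z).1 - √(1 - (φ z).2 ^ 2)| ^ β)) +
          ∫⁻ z in closedBall a d, ENNReal.ofReal (|(φ z).1 + √(1 - (φ z).2 ^ 2)| ^ β) := by
        rw [← lintegral_add_left (by fun_prop)]
        exact lintegral_congr fun z => ENNReal.ofReal_add (by positivity) (by positivity)
    _ ≤ ENNReal.ofReal (4 * (1 + (β + 1)⁻¹) * d ^ (2 + β)) +
          ENNReal.ofReal (4 * (1 + (β + 1)⁻¹) * d ^ (2 + β)) := by
        gcongr
        · exact setLIntegral_closedBall_rpow_abs_sub_graph_le hβ hd hφ hφ'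
            (h := fun y => √(1 - y ^ 2)) (by fun_prop) a
        · simpa only [sub_neg_eq_add] using
            setLIntegral_closedBall_rpow_abs_sub_graph_le hβ hd hφ hφ'
              (h := fun y => -√(1 - y ^ 2)) (by fun_prop) a
    _ = ENNReal.ofReal (8 * (1 + (β + 1)⁻¹) * d ^ (2 + β)) := by
        rw [← ENNReal.ofReal_add (by positivity) (by positivity)]
        congr 1
        ring

/-- The weighted area measure `dA_β(z) = (β + 1)(1 - |z|²)^β dA(z)` on the unit disc, of which
`Vbeta` is a power; the `π` in the denominator normalizes the area measure `dA`. -/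
def diskMeasure (β : ℝ) : Measure ℂ :=
  (volume.restrict (ball 0 1)).withDensity
    fun z => ENNReal.ofReal ((β + 1) * (1 - ‖z‖ ^ 2) ^ β / Real.pi)

instance (β : ℝ) : SigmaFinite (diskMeasure β) :=
  SigmaFinite.withDensity_ofReal _

lemma Vbeta_eq_pi_diskMeasure (hβ : -1 ≤ β) (n : ℕ) :
    Vbeta n β = Measure.pi fun _ => diskMeasure β := by
  have hpolydisc : polydisc n = univ.pi fun _ => ball 0 1 := by
    ext z
    simp [polydisc]
  have hdensity {z : ℂ} (hz : ‖z‖ < 1) : 0 ≤ (β + 1) * (1 - ‖z‖ ^ 2) ^ β / Real.pi := by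
    have : 0 ≤ β + 1 := by linarith
    have : 0 ≤ 1 - ‖z‖ ^ 2 := sub_nonneg.mpr (pow_le_one₀ (norm_nonneg z) hz.le)
    positivity
  have : ∀ _ : Fin n, SigmaFinite ((volume.restrict (ball (0 : ℂ) 1)).withDensity
      fun z => ENNReal.ofReal ((β + 1) * (1 - ‖z‖ ^ 2) ^ β / Real.pi)) :=
    fun _ => SigmaFinite.withDensity_ofReal _
  unfold diskMeasure
  rw [pi_withDensity _ fun _ => by fun_prop, ← Measure.restrict_pi_pi, ← volume_pi, ← hpolydisc]
  refine withDensity_congr_ae (ae_restrict_of_forall_mem ?_ fun z hz => ?_)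
  · exact hpolydisc ▸ .univ_pi fun _ => measurableSet_ball
  · exact ENNReal.ofReal_prod_of_nonneg fun j _ => hdensity (hz j)

lemma diskMeasure_density_le (hβ : β ∈ Ioc (-1) 0) {z : ℂ} (hz : z ∈ ball 0 1) :
    (β + 1) * (1 - ‖z‖ ^ 2) ^ β / Real.pi ≤
      circleSingularity β (z.re, z.im) + circleSingularity β (z.im, z.re) := by
  have hz' : z.re ^ 2 + z.im ^ 2 = ‖z‖ ^ 2 := by rw [Complex.sq_norm, Complex.normSq_apply]; ring
  have hlt : ‖z‖ ^ 2 < 1 := pow_lt_one₀ (norm_nonneg z) (mem_ball_zero_iff.mp hz) two_ne_zero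
  have hconst : (β + 1) / Real.pi ≤ 1 / 2 := by
    rw [div_le_iff₀ Real.pi_pos]
    linarith [hβ.2, Real.two_le_pi]
  have hweight : (1 - ‖z‖ ^ 2) ^ β ≤
      2 * (circleSingularity β (z.re, z.im) + circleSingularity β (z.im, z.re)) := by
    have hre := circleSingularity_nonneg β (z.re, z.im)
    have him := circleSingularity_nonneg β (z.im, z.re)
    rcases le_total |z.im| |z.re| with h | h
    · linarith [hz' ▸ rpow_one_sub_sq_add_sq_le hβ (hz' ▸ hlt) h]
    · rw [add_comm] at hz'
      linarith [hz' ▸ rpow_one_sub_sq_add_sq_le hβ (hz' ▸ hlt) h]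
  calc (β + 1) * (1 - ‖z‖ ^ 2) ^ β / Real.pi = (β + 1) / Real.pi * (1 - ‖z‖ ^ 2) ^ β :=
        mul_div_right_comm ..
    _ ≤ 1 / 2 * (2 * (circleSingularity β (z.re, z.im) + circleSingularity β (z.im, z.re))) :=
        mul_le_mul hconst hweight (Real.rpow_nonneg (by linarith) β) (by norm_num)
    _ = circleSingularity β (z.re, z.im) + circleSingularity β (z.im, z.re) := by ring

lemma diskMeasure_closedBall_le (hβ : β ∈ Ioc (-1) 0) (a : ℂ) {d : ℝ} (hd : 0 < d) :
    diskMeasure β (closedBall a d) ≤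
      ENNReal.ofReal (16 * (1 + (β + 1)⁻¹) * d ^ (2 + β)) := by
  have hβ' : 0 < β + 1 := by linarith [hβ.1]
  have hreIm : MeasurePreserving Complex.equivRealProd :=
    Complex.volume_preserving_equiv_real_prod
  have himRe : MeasurePreserving (Prod.swap ∘ Complex.equivRealProd) :=
    (Measure.measurePreserving_swap (μ := volume) (ν := volume)).comp hreIm
  have hswap : LipschitzWith 1 (Prod.swap ∘ Complex.equivRealProd) :=
    (LipschitzWith.prod_snd.prodMk LipschitzWith.prod_fst).comp Complex.lipschitz_equivRealProd
      |>.weaken (by simp)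
  rw [diskMeasure, withDensity_apply _ measurableSet_closedBall,
    Measure.restrict_restrict measurableSet_closedBall]
  calc ∫⁻ z in closedBall a d ∩ ball 0 1,
        ENNReal.ofReal ((β + 1) * (1 - ‖z‖ ^ 2) ^ β / Real.pi)
      ≤ ∫⁻ z in closedBall a d ∩ ball 0 1,
          (ENNReal.ofReal (circleSingularity β (z.re, z.im)) +
            ENNReal.ofReal (circleSingularity β (z.im, z.re))) :=
        setLIntegral_mono (by fun_prop) fun z hz =>
          (ENNReal.ofReal_le_ofReal (diskMeasure_density_le hβ hz.2)).trans ENNReal.ofReal_add_le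
    _ ≤ ∫⁻ z in closedBall a d, (ENNReal.ofReal (circleSingularity β (z.re, z.im)) +
          ENNReal.ofReal (circleSingularity β (z.im, z.re))) :=
        lintegral_mono_set inter_subset_left
    _ ≤ ENNReal.ofReal (8 * (1 + (β + 1)⁻¹) * d ^ (2 + β)) +
          ENNReal.ofReal (8 * (1 + (β + 1)⁻¹) * d ^ (2 + β)) := by
        rw [lintegral_add_left (by fun_prop)]
        exact add_le_add
          (setLIntegral_closedBall_circleSingularity_le hβ hd hreIm
            Complex.lipschitz_equivRealProd a)
          (setLIntegral_closedBall_circleSingularity_le hβ hd himRe hswap a)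
    _ = ENNReal.ofReal (16 * (1 + (β + 1)⁻¹) * d ^ (2 + β)) := by
        rw [← ENNReal.ofReal_add (by positivity) (by positivity)]
        congr 1
        ring

end DiskMeasure

section Calculus

lemma fderivWithin_smul_of_differentiableOn_interior {𝕜 𝕜' E F : Type*}
    [NontriviallyNormedField 𝕜] [NontriviallyNormedField 𝕜'] [NormedAlgebra 𝕜 𝕜']
    [NormedAddCommGroup E] [NormedSpace 𝕜 E] [NormedSpace 𝕜' E] [IsScalarTower 𝕜 𝕜' E]
    [NormedAddCommGroup F] [NormedSpace 𝕜 F] [NormedSpace 𝕜' F] [IsScalarTower 𝕜 𝕜' F]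
    {f : E → F} {s : Set E} (hs : UniqueDiffOn 𝕜 s) (hs' : s ⊆ closure (interior s))
    (hf : ContDiffOn 𝕜 1 f s) (hf' : DifferentiableOn 𝕜' f (interior s)) {z : E} (hz : z ∈ s)
    (c : 𝕜') (v : E) : fderivWithin 𝕜 f s z (c • v) = c • fderivWithin 𝕜 f s z v := by
  have hcont := hf.continuousOn_fderivWithin hs le_rfl
  have hinterior : EqOn (fun y => fderivWithin 𝕜 f s y (c • v))
      (fun y => c • fderivWithin 𝕜 f s y v) (interior s) := fun y hy => by
    have hy' := hf'.differentiableAt (isOpen_interior.mem_nhds hy)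
    simp only [fderivWithin_of_mem_nhds (mem_interior_iff_mem_nhds.mp hy),
      hy'.fderiv_restrictScalars 𝕜, ContinuousLinearMap.coe_restrictScalars', map_smul]
  exact hinterior.of_subset_closure (hcont.clm_apply continuousOn_const)
    ((hcont.clm_apply continuousOn_const).const_smul c) interior_subset hs' hz

/-- The complex Jacobian matrix `d_zψ` of `ψ`, computed from the real derivative within `s`, which
also makes sense at boundary points of `s`. -/
def jacobianWithin {n : ℕ} (ψ : (Fin n → ℂ) → Fin n → ℂ) (s : Set (Fin n → ℂ)) (z : Fin n → ℂ) :
    Matrix (Fin n) (Fin n) ℂ :=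
  Matrix.of fun i j => fderivWithin ℝ ψ s z (Pi.single j 1) i

open scoped Matrix in
lemma fderivWithin_eq_jacobianWithin_mulVec {n : ℕ} {ψ : (Fin n → ℂ) → Fin n → ℂ}
    {s : Set (Fin n → ℂ)} {z : Fin n → ℂ}
    (hlin : ∀ (c : ℂ) v, fderivWithin ℝ ψ s z (c • v) = c • fderivWithin ℝ ψ s z v)
    (w : Fin n → ℂ) : fderivWithin ℝ ψ s z w = jacobianWithin ψ s z *ᵥ w := by
  have hw : w = ∑ j, w j • (Pi.single j 1 : Fin n → ℂ) := pi_eq_sum_univ' w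
  ext i
  conv_lhs => rw [hw, map_sum]
  simp only [hlin, Finset.sum_apply, Pi.smul_apply, smul_eq_mul, jacobianWithin, Matrix.mulVec,
    dotProduct, Matrix.of_apply, mul_comm]

lemma exists_forall_norm_image_sub_sub_fderivWithin_le {E F : Type*}
    [NormedAddCommGroup E] [NormedSpace ℝ E] [NormedAddCommGroup F] [NormedSpace ℝ F]
    {f : E → F} {s : Set E} (hs : Convex ℝ s) (hs' : UniqueDiffOn ℝ s)
    (hf : ContDiffOn ℝ 1 f s) {x : E} (hx : x ∈ s) {ε : ℝ} (hε : 0 < ε) :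
    ∃ r > (0 : ℝ), ∀ z ∈ s ∩ closedBall x r, ∀ z' ∈ s ∩ closedBall x r,
      ‖f z - f z' - fderivWithin ℝ f s x (z - z')‖ ≤ ε * ‖z - z'‖ := by
  obtain ⟨r, hr, hfderiv⟩ := (nhdsWithin_hasBasis nhds_basis_closedBall s).mem_iff.mp <|
    hf.continuousOn_fderivWithin hs' le_rfl x hx (closedBall_mem_nhds _ hε)
  refine ⟨r, hr, fun z hz z' hz' => ?_⟩
  refine (hs.inter (convex_closedBall x r)).norm_image_sub_le_of_norm_hasFDerivWithin_le'
    (f' := fderivWithin ℝ f s) (fun y hy => ?_) (fun y hy => ?_) hz' hz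
  · exact (hf.differentiableOn one_ne_zero y hy.1).hasFDerivWithinAt.mono inter_subset_left
  · exact mem_closedBall_iff_norm.mp (hfderiv hy.symm)

end Calculus

section SublevelBounds

variable {n : ℕ}

/-- The volume estimate `μ {z ∈ s | |ψ_i z| < δ_i} ≤ c * ∏ δ_i ^ p` on the part of a sublevel set
lying in `s`, with a constant `c` independent of the levels `δ_i`. -/
def HasSublevelBound (μ : Measure (Fin n → ℂ)) (ψ : (Fin n → ℂ) → Fin n → ℂ) (p : ℝ)
    (s : Set (Fin n → ℂ)) : Prop :=
  ∃ c > (0 : ℝ), ∀ δ : Fin n → ℝ, (∀ i, 0 < δ i) →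
    μ {z | z ∈ s ∧ ∀ i, ‖ψ z i‖ < δ i} ≤ ENNReal.ofReal (c * ∏ i, δ i ^ p)

namespace HasSublevelBound

variable {μ : Measure (Fin n → ℂ)} {ψ : (Fin n → ℂ) → Fin n → ℂ} {p : ℝ} {s t : Set (Fin n → ℂ)}

protected lemma empty : HasSublevelBound μ ψ p ∅ :=
  ⟨1, one_pos, fun δ _ => by simp⟩

lemma mono (hst : s ⊆ t) (ht : HasSublevelBound μ ψ p t) : HasSublevelBound μ ψ p s := by
  obtain ⟨c, hc, hμ⟩ := ht
  exact ⟨c, hc, fun δ hδ => (hμ δ hδ).trans' (measure_mono fun z hz => ⟨hst hz.1, hz.2⟩)⟩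

lemma union (hs : HasSublevelBound μ ψ p s) (ht : HasSublevelBound μ ψ p t) :
    HasSublevelBound μ ψ p (s ∪ t) := by
  obtain ⟨c, hc, hμs⟩ := hs
  obtain ⟨c', hc', hμt⟩ := ht
  refine ⟨c + c', add_pos hc hc', fun δ hδ => ?_⟩
  have hprod : 0 ≤ ∏ i, δ i ^ p := Finset.prod_nonneg fun i _ => Real.rpow_nonneg (hδ i).le p
  calc μ {z | z ∈ s ∪ t ∧ ∀ i, ‖ψ z i‖ < δ i}
      ≤ μ ({z | z ∈ s ∧ ∀ i, ‖ψ z i‖ < δ i} ∪ {z | z ∈ t ∧ ∀ i, ‖ψ z i‖ < δ i}) :=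
        measure_mono fun z ⟨hz, hδz⟩ => hz.imp (And.intro · hδz) (And.intro · hδz)
    _ ≤ ENNReal.ofReal (c * ∏ i, δ i ^ p) + ENNReal.ofReal (c' * ∏ i, δ i ^ p) :=
        (measure_union_le _ _).trans (add_le_add (hμs δ hδ) (hμt δ hδ))
    _ = ENNReal.ofReal ((c + c') * ∏ i, δ i ^ p) := by
        rw [add_mul, ENNReal.ofReal_add (by positivity) (by positivity)]

end HasSublevelBound

lemma isClosed_sublevel {ψ : (Fin n → ℂ) → Fin n → ℂ} {s : Set (Fin n → ℂ)} (hs : IsClosed s)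
    (hψ : ContinuousOn ψ s) (δ : Fin n → ℝ) : IsClosed {z ∈ s | ∀ i, ‖ψ z i‖ ≤ δ i} := by
  have hle : IsClosed {w : Fin n → ℂ | ∀ i, ‖w i‖ ≤ δ i} := by
    simp only [ofPred_forall]
    exact isClosed_iInter fun i => isClosed_le (by fun_prop) continuous_const
  exact hψ.preimage_isClosed_of_isClosed hs hle

open scoped Matrix in
lemma hasSublevelBound_of_approximates {μ : Measure ℂ} [SigmaFinite μ] {C p : ℝ} (hC : 0 < C)
    (hμ : ∀ a d, 0 < d → μ (closedBall a d) ≤ ENNReal.ofReal (C * d ^ p))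
    {A : Matrix (Fin n) (Fin n) ℂ} (hA : A.det ≠ 0) :
    ∃ ε > (0 : ℝ), ∀ {ψ : (Fin n → ℂ) → Fin n → ℂ} {s : Set (Fin n → ℂ)}, IsClosed s →
      ContinuousOn ψ s →
      (∀ z ∈ s, ∀ z' ∈ s, ‖ψ z - ψ z' - A *ᵥ (z - z')‖ ≤ ε * ‖z - z'‖) →
      HasSublevelBound (Measure.pi fun _ => μ) ψ p s := by
  obtain ⟨ε, hε, K, hK, hdist⟩ := exists_forall_sublevel_dist_le A hA
  refine ⟨ε, hε, fun {ψ s} hs hcont hψ => ⟨(C * K ^ p) ^ n, by positivity, fun δ hδ => ?_⟩⟩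
  obtain ⟨σ, τ, hστ⟩ := hdist ψ s hψ δ
  calc Measure.pi (fun _ => μ) {z | z ∈ s ∧ ∀ i, ‖ψ z i‖ < δ i}
      ≤ Measure.pi (fun _ => μ) {z ∈ s | ∀ i, ‖ψ z i‖ ≤ δ i} :=
        measure_mono fun z hz => ⟨hz.1, fun i => (hz.2 i).le⟩
    _ ≤ ∏ i, ENNReal.ofReal (C * (K * δ (τ i)) ^ p) :=
        pi_le_prod_of_dist_le_of_equiv (isClosed_sublevel hs hcont δ).measurableSet σ
          (fun i a => hμ a _ (mul_pos hK (hδ _)))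
          fun z hz z' hz' i hzz' => (dist_le_pi_dist z z' _).trans (hστ z hz z' hz' i hzz')
    _ = ∏ i, ENNReal.ofReal (C * (K * δ i) ^ p) :=
        Equiv.prod_comp τ fun i => ENNReal.ofReal (C * (K * δ i) ^ p)
    _ = ENNReal.ofReal (∏ i, C * K ^ p * δ i ^ p) := by
        rw [ENNReal.ofReal_prod_of_nonneg fun i _ => by have := hδ i; positivity]
        refine Finset.prod_congr rfl fun i _ => ?_
        rw [Real.mul_rpow hK.le (hδ i).le, mul_assoc]
    _ = ENNReal.ofReal ((C * K ^ p) ^ n * ∏ i, δ i ^ p) := by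
        rw [Finset.prod_mul_distrib, Fin.prod_const]

end SublevelBounds

theorem nondegenerate_sublevel_volume_bound_general {n : ℕ} {μ : Measure ℂ} [SigmaFinite μ]
    {C p : ℝ} (hC : 0 < C)
    (hμ : ∀ a d, 0 < d → μ (closedBall a d) ≤ ENNReal.ofReal (C * d ^ p))
    {D : Set (Fin n → ℂ)} (hD : Convex ℝ D) (hD' : (interior D).Nonempty)
    {ψ : (Fin n → ℂ) → Fin n → ℂ} (hhol : DifferentiableOn ℂ ψ (interior D))
    (hsm : ContDiffOn ℝ 1 ψ D) {K : Set (Fin n → ℂ)} (hK : IsCompact K) (hKD : K ⊆ D)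
    (hnd : ∀ z ∈ K, (jacobianWithin ψ D z).det ≠ 0) :
    HasSublevelBound (Measure.pi fun _ => μ) ψ p K := by
  have hunique : UniqueDiffOn ℝ D := uniqueDiffOn_convex hD hD'
  have hclosure : D ⊆ closure (interior D) :=
    hD.closure_interior_eq_closure_of_nonempty_interior hD' ▸ subset_closure
  refine hK.induction_on .empty (fun _ _ => .mono) (fun _ _ => .union) fun z₀ hz₀ => ?_
  obtain ⟨ε, hε, hbound⟩ := hasSublevelBound_of_approximates hC hμ (hnd z₀ hz₀)
  obtain ⟨r, hr, happrox⟩ := exists_forall_norm_image_sub_sub_fderivWithin_le hD hunique hsm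
    (hKD hz₀) hε
  simp only [fderivWithin_eq_jacobianWithin_mulVec
    (fderivWithin_smul_of_differentiableOn_interior hunique hclosure hsm hhol (hKD hz₀))]
    at happrox
  have hsub : K ∩ closedBall z₀ r ⊆ D ∩ closedBall z₀ r := inter_subset_inter_left _ hKD
  refine ⟨K ∩ closedBall z₀ r, inter_mem_nhdsWithin K (closedBall_mem_nhds z₀ hr), ?_⟩
  exact hbound (hK.isClosed.inter isClosed_closedBall)
    (hsm.continuousOn.mono (inter_subset_left.trans hKD))
    fun z hz z' hz' => happrox z (hsub hz) z' (hsub hz')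

lemma closedPolydisc_eq_closedBall (n : ℕ) : closedPolydisc n = closedBall 0 1 := by
  ext z
  simp [closedPolydisc, pi_norm_le_iff_of_nonneg]

lemma isCompact_closedPolydisc (n : ℕ) : IsCompact (closedPolydisc n) :=
  closedPolydisc_eq_closedBall n ▸ isCompact_closedBall 0 1

lemma convex_closedPolydisc (n : ℕ) : Convex ℝ (closedPolydisc n) :=
  closedPolydisc_eq_closedBall n ▸ convex_closedBall 0 1

lemma interior_closedPolydisc (n : ℕ) : interior (closedPolydisc n) = polydisc n := by
  rw [closedPolydisc_eq_closedBall, interior_closedBall _ one_ne_zero]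
  ext z
  simp [polydisc, pi_norm_lt_iff]

theorem nondegenerate_sublevel_volume_bound (k : ℕ) (ψ : (Fin k → ℂ) → (Fin k → ℂ))
    (hhol : DifferentiableOn ℂ ψ (polydisc k))
    (hsm : ContDiffOn ℝ 1 ψ (closedPolydisc k))
    (V : Set (Fin k → ℂ)) (hVopen : IsOpen V) (hVconn : IsConnected V)
    (hnd : ∀ z ∈ closure V ∩ closedPolydisc k,
      Matrix.det (Matrix.of fun i j =>
        fderivWithin ℝ ψ (closedPolydisc k) z (Pi.single j 1) i) ≠ 0)
    (β : ℝ) (hβ : β ∈ Set.Ioc (-1:ℝ) 0) :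
    ∃ c > (0:ℝ), ∀ δ : Fin k → ℝ, (∀ i, 0 < δ i) →
      Vbeta k β {z | z ∈ closure V ∩ closedPolydisc k ∧ ∀ i, ‖ψ z i‖ < δ i} ≤
        ENNReal.ofReal (c * ∏ i, δ i ^ (2 + β)) := by
  have hβ' : 0 < β + 1 := by linarith [hβ.1]
  rw [Vbeta_eq_pi_diskMeasure hβ.1.le]
  exact nondegenerate_sublevel_volume_bound_general (by positivity)
    (fun a d => diskMeasure_closedBall_le hβ a) (convex_closedPolydisc k)
    (interior_closedPolydisc k ▸ ⟨0, fun j => by simp⟩) (interior_closedPolydisc k ▸ hhol) hsm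
    ((isCompact_closedPolydisc k).inter_left isClosed_closure) inter_subset_right hnd

end
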